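/- Let T be a finite tree with vertex set T and let f : V → ℝ be any function. Then the symmetric matrix Y ∈ ℝ^{T×T} defined by Y_{ij} = ⟨f, K̄^{dist_T(i,j)} f⟩_π (where dist_T is the graph distance in the tree T, and K̄^0 is the identity) is positive semidefinite. In particular, for any positive semidefinite Ψ ∈ ℝ^{T×T}, Σ_{i,j ∈ T} Ψ_{ij} · ⟨f, K̄^{dist_T(i,j)} f⟩_π ≥ 0. -/

import Mathlib

/-!
The signed transition operator is self-adjoint for `⟨·, ·⟩_π`, since `π(u) K(u, v)` and `Ξ` are
symmetric, and contracts its norm, by Cauchy–Schwarz in each row together with `∑ v, K(u, v) = 1`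
and reversibility. So it suffices to show `∑ i j, ⟨x i, L ^ dist(i, j) (x j)⟩ ≥ 0` for a
self-adjoint contraction `L` and a finitely supported family `x` of vectors on a tree.

Root the tree at `r` and let `l ≠ r` be a deepest vertex with `x l ≠ 0`. Every other vertex of the
support is reached from `l` through its parent `p`, so replacing the vector `a` at `l` by the
vector `L a` added at `p` changes the sum only in its `l`-diagonal part: it decreases by
`⟨a, a⟩ - ⟨L a, L a⟩ ≥ 0`. Repeating this moves everything to the root, where the sum is
`⟨x r, x r⟩ ≥ 0`. The claim about `Ψ` is then the Schur product theorem.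
-/

open Matrix

section WeightedGraph

variable {V : Type*} [Fintype V] [Nonempty V]

/-- The (weighted) degree `deg(u) = ∑_v A_{uv}` of a weighted graph `A`. -/
noncomputable def gdeg (A : Matrix V V ℝ) (u : V) : ℝ := ∑ v, A u v

/-- The total weight `m = ∑_u deg(u)`. -/
noncomputable def gm (A : Matrix V V ℝ) : ℝ := ∑ u, gdeg A u

/-- The stationary distribution `π(u) = deg(u)/m` of the random walk on `A`. -/
noncomputable def gpi (A : Matrix V V ℝ) (u : V) : ℝ := gdeg A u / gm A

/-- The random-walk transition matrix `K = D⁻¹A`, i.e. `K_{uv} = A_{uv}/deg(u)`. -/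
noncomputable def gK (A : Matrix V V ℝ) : Matrix V V ℝ :=
  Matrix.of fun u v => A u v / gdeg A u

end WeightedGraph

section TreeDistance

variable {T : Type*} {G : SimpleGraph T}

lemma exists_adj_dist_eq_add_one (hG : G.Connected) {v w : T} (hvw : v ≠ w) :
    ∃ u, G.Adj v u ∧ G.dist v w = G.dist u w + 1 := by
  obtain ⟨walk, hwalk⟩ := hG.exists_walk_length_eq_dist v w
  cases walk with
  | nil => exact absurd rfl hvw
  | @cons _ u _ hvu tail =>
    refine ⟨u, hvu, ?_⟩
    have htail := SimpleGraph.dist_le tail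
    obtain ⟨geodesic, hgeodesic⟩ := hG.exists_walk_length_eq_dist u w
    have hle := SimpleGraph.dist_le (geodesic.cons hvu)
    rw [SimpleGraph.Walk.length_cons] at hwalk hle
    omega

lemma eq_of_adj_of_dist_eq_add_one (hG : G.IsTree) {v w p q : T} (hp : G.Adj v p)
    (hq : G.Adj v q) (hdp : G.dist v w = G.dist p w + 1) (hdq : G.dist v w = G.dist q w + 1) :
    p = q := by
  obtain ⟨P, hP⟩ := hG.connected.exists_walk_length_eq_dist p w
  obtain ⟨Q, hQ⟩ := hG.connected.exists_walk_length_eq_dist q w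
  have hPpath : (P.cons hp).IsPath :=
    SimpleGraph.Walk.isPath_of_length_eq_dist _ (by rw [SimpleGraph.Walk.length_cons, hP, hdp])
  have hQpath : (Q.cons hq).IsPath :=
    SimpleGraph.Walk.isPath_of_length_eq_dist _ (by rw [SimpleGraph.Walk.length_cons, hQ, hdq])
  simpa using congrArg SimpleGraph.Walk.snd ((hG.existsUnique_path v w).unique hPpath hQpath)

/-- If the geodesic from `l` to `j` started at a child `q` of `l` rather than at the parent `p`,
then, as `j` is no deeper than `q`, the geodesic from `q` to `j` would have to return to `l`. -/
lemma dist_eq_dist_parent_add_one (hG : G.IsTree) {r l p j : T} (hlp : G.Adj l p)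
    (hp : G.dist l r = G.dist p r + 1) (hjl : j ≠ l) (hdepth : G.dist j r ≤ G.dist l r) :
    G.dist l j = G.dist p j + 1 := by
  induction hn : G.dist l j generalizing l p with
  | zero => exact absurd (hG.connected.dist_eq_zero_iff.mp hn).symm hjl
  | succ n ih =>
    obtain ⟨q, hlq, hq⟩ := exists_adj_dist_eq_add_one hG.connected hjl.symm
    obtain rfl | hqp := eq_or_ne q p
    · rw [← hn, hq]
    have hchild : G.dist q r = G.dist l r + 1 := by
      have := hG.dist_eq_dist_add_one_of_adj r hlq
      rw [G.dist_comm (u := r), G.dist_comm (u := r)] at this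
      exact this.resolve_left fun h => hqp (eq_of_adj_of_dist_eq_add_one hG hlq hlp h hp)
    have hjq : j ≠ q := by rintro rfl; omega
    have hback := ih hlq.symm hchild hjq (by omega) (by omega)
    omega

end TreeDistance

lemma sum_support_erase_add_single_lt {ι M : Type*} [AddZeroClass M] (d : ι → ℕ) {x : ι →₀ M}
    {l p : ι} (hl : l ∈ x.support) (hd : d p < d l) (b : M) :
    ∑ i ∈ (x.erase l + Finsupp.single p b).support, d i < ∑ i ∈ x.support, d i := by
  classical
  have hsupp : (x.erase l + Finsupp.single p b).support ⊆ insert p (x.support.erase l) := by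
    refine Finsupp.support_add.trans ?_
    rw [Finsupp.support_erase, Finset.insert_eq, Finset.union_comm]
    exact Finset.union_subset_union_left Finsupp.support_single_subset
  calc ∑ i ∈ (x.erase l + Finsupp.single p b).support, d i
      ≤ ∑ i ∈ insert p (x.support.erase l), d i := Finset.sum_le_sum_of_subset hsupp
    _ ≤ d p + ∑ i ∈ x.support.erase l, d i := by
        by_cases hp : p ∈ x.support.erase l <;> simp [hp]
    _ < d l + ∑ i ∈ x.support.erase l, d i := by gcongr
    _ = ∑ i ∈ x.support, d i := Finset.add_sum_erase _ _ hl

section DistForm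

variable {R E T : Type*} [CommRing R] [AddCommGroup E] [Module R E]
  {B : LinearMap.BilinForm R E} {L : Module.End R E} {G : SimpleGraph T}

lemma isSelfAdjoint_pow (hL : LinearMap.IsSelfAdjoint B L) (n : ℕ) :
    LinearMap.IsSelfAdjoint B (L ^ n : Module.End R E) := by
  induction n with
  | zero => exact LinearMap.isAdjointPair_one
  | succ n ih => simpa only [LinearMap.IsSelfAdjoint, pow_succ, ← pow_succ'] using hL.mul ih

/-- The bilinear form `(x, y) ↦ ∑ i j, B (x i) (L ^ dist(i, j) (y j))` on finitely supported
families of vectors indexed by the vertices of `G`. Its Gram matrix on families supported at single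
vertices is the moment matrix. -/
noncomputable def distForm (G : SimpleGraph T) (B : LinearMap.BilinForm R E) (L : Module.End R E) :
    LinearMap.BilinForm R (T →₀ E) :=
  Finsupp.lsum R fun i =>
    (Finsupp.lsum R).toLinearMap ∘ₗ LinearMap.pi fun j => B.compl₂ (L ^ G.dist i j)

lemma distForm_single_left (i : T) (a : E) (y : T →₀ E) :
    distForm G B L (Finsupp.single i a) y = y.sum fun j b => B a ((L ^ G.dist i j) b) := by
  rw [distForm, Finsupp.lsum_single]
  rfl

lemma distForm_single_single (i j : T) (a b : E) :
    distForm G B L (Finsupp.single i a) (Finsupp.single j b) = B a ((L ^ G.dist i j) b) := by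
  simp [distForm]

lemma isSymm_distForm (hB : B.IsSymm) (hL : LinearMap.IsSelfAdjoint B L) :
    (distForm G B L).IsSymm := by
  refine ⟨fun x y => ?_⟩
  induction x using Finsupp.induction_linear with
  | zero => simp
  | add x₁ x₂ h₁ h₂ => simp [h₁, h₂]
  | single i a =>
    induction y using Finsupp.induction_linear with
    | zero => simp
    | add y₁ y₂ h₁ h₂ => simp [h₁, h₂]
    | single j b =>
      rw [distForm_single_single, distForm_single_single, hB.eq, isSelfAdjoint_pow hL,
        G.dist_comm]

lemma distForm_single_eq_of_dist_eq_add_one (hL : LinearMap.IsSelfAdjoint B L) {l p : T}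
    {y : T →₀ E} (h : ∀ j ∈ y.support, G.dist l j = G.dist p j + 1) (a : E) :
    distForm G B L (Finsupp.single l a) y = distForm G B L (Finsupp.single p (L a)) y := by
  rw [distForm_single_left, distForm_single_left]
  refine Finset.sum_congr rfl fun j hj => ?_
  beta_reduce
  rw [h j hj, pow_succ', Module.End.mul_apply, hL]

lemma distForm_add_single_self (hB : B.IsSymm) (hL : LinearMap.IsSelfAdjoint B L) {l p : T}
    {y : T →₀ E} (h : ∀ j ∈ y.support, G.dist l j = G.dist p j + 1) (a : E) :
    distForm G B L (y + Finsupp.single l a) (y + Finsupp.single l a) =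
      distForm G B L (y + Finsupp.single p (L a)) (y + Finsupp.single p (L a)) +
        (B a a - B (L a) (L a)) := by
  have hsymm := (isSymm_distForm (G := G) hB hL).eq y
  have hmove := distForm_single_eq_of_dist_eq_add_one hL h a
  simp only [map_add, LinearMap.add_apply, hsymm, hmove, distForm_single_single,
    SimpleGraph.dist_self, pow_zero, Module.End.one_apply]
  ring

variable [PartialOrder R] [IsOrderedAddMonoid R]

lemma distForm_self_nonneg (hG : G.IsTree) (hB : B.IsPosSemidef)
    (hL : LinearMap.IsSelfAdjoint B L) (hcontr : ∀ a, B (L a) (L a) ≤ B a a) (x : T →₀ E) :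
    0 ≤ distForm G B L x x := by
  obtain ⟨r⟩ := hG.connected.nonempty
  induction hn : ∑ i ∈ x.support, G.dist i r using Nat.strong_induction_on generalizing x with
  | _ n ih =>
    obtain rfl | hx := eq_or_ne x 0
    · simp
    obtain ⟨l, hl, hmax⟩ := x.support.exists_max_image (G.dist · r)
      (Finsupp.support_nonempty_iff.mpr hx)
    obtain rfl | hlr := eq_or_ne l r
    · have hsupp : x.support ⊆ {l} := fun i hi => by
        simpa [hG.connected.dist_eq_zero_iff] using hmax i hi
      rw [Finsupp.support_subset_singleton.mp hsupp, distForm_single_single]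
      simpa using hB.nonneg (x l)
    obtain ⟨p, hlp, hp⟩ := exists_adj_dist_eq_add_one hG.connected hlr
    have hdist : ∀ j ∈ (x.erase l).support, G.dist l j = G.dist p j + 1 := fun j hj => by
      classical
      rw [Finsupp.support_erase, Finset.mem_erase] at hj
      exact dist_eq_dist_parent_add_one hG hlp hp hj.1 (hmax j hj.2)
    rw [← x.erase_add_single l, distForm_add_single_self hB.isSymm hL hdist]
    have hlt := sum_support_erase_add_single_lt (G.dist · r) hl
      (show G.dist p r < G.dist l r by omega) (L (x l))
    exact add_nonneg (ih _ (hn ▸ hlt) _ rfl) (sub_nonneg.mpr (hcontr (x l)))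

lemma posSemidef_distPow (hG : G.IsTree) [StarRing R] [TrivialStar R] (hB : B.IsPosSemidef)
    (hL : LinearMap.IsSelfAdjoint B L) (hcontr : ∀ a, B (L a) (L a) ≤ B a a) (x : T → E) :
    (Matrix.of fun i j => B (x i) ((L ^ G.dist i j) (x j))).PosSemidef := by
  refine ⟨?_, fun c => ?_⟩
  · ext i j
    rw [Matrix.conjTranspose_apply, star_trivial, Matrix.of_apply, Matrix.of_apply, hB.isSymm.eq,
      isSelfAdjoint_pow hL, G.dist_comm]
  · refine (distForm_self_nonneg hG hB hL hcontr
      (Finsupp.linearCombination R (fun i => Finsupp.single i (x i)) c)).trans_eq ?_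
    rw [Finsupp.sum_comm]
    simp [Finsupp.linearCombination_apply, Finsupp.sum, distForm_single_single, mul_comm,
      mul_left_comm]

end DistForm

section WeightedForm

variable {R V : Type*} [CommRing R] [Fintype V] {w : V → R} {M : Matrix V V R}

lemma sq_mulVec_le_sum_abs_mul_sq [LinearOrder R] [IsStrictOrderedRing R] {u : V}
    (hM : ∑ v, |M u v| ≤ 1) (x : V → R) :
    (M *ᵥ x) u ^ 2 ≤ ∑ v, |M u v| * x v ^ 2 := by
  have hnonneg : ∀ v, 0 ≤ |M u v| * x v ^ 2 := fun v => by positivity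
  calc (M *ᵥ x) u ^ 2
      ≤ (∑ v, |M u v|) * ∑ v, |M u v| * x v ^ 2 :=
        Finset.sum_sq_le_sum_mul_sum_of_sq_le_mul _ (fun v _ => abs_nonneg _)
          (fun v _ => hnonneg v) fun v _ => by rw [mul_pow, ← mul_assoc, abs_mul_abs_self,
            sq (M u v)]
    _ ≤ ∑ v, |M u v| * x v ^ 2 :=
        mul_le_of_le_one_left (Finset.sum_nonneg fun v _ => hnonneg v) hM

variable [DecidableEq V]

lemma toBilin'_diagonal_apply (w x y : V → R) :
    Matrix.toBilin' (diagonal w) x y = ∑ u, w u * x u * y u := by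
  rw [Matrix.toBilin'_apply', dotProduct]
  exact Finset.sum_congr rfl fun u _ => by rw [mulVec_diagonal]; ring

lemma isSelfAdjoint_toBilin' {W : Matrix V V R} (hW : W.IsSymm) (hWM : (W * M).IsSymm) :
    LinearMap.IsSelfAdjoint (Matrix.toBilin' W) (Matrix.toLin' M) := by
  refine (isAdjointPair_toLinearMap₂' _ _ _ _).mpr ?_
  rw [Matrix.IsAdjointPair, ← hWM.eq, Matrix.transpose_mul, hW.eq]

variable [LinearOrder R] [IsStrictOrderedRing R]

lemma isPosSemidef_toBilin'_diagonal (hw : 0 ≤ w) :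
    (Matrix.toBilin' (diagonal w)).IsPosSemidef where
  eq x y := by simp only [toBilin'_diagonal_apply, mul_right_comm]
  nonneg x := by
    rw [toBilin'_diagonal_apply]
    exact Finset.sum_nonneg fun u _ => by
      rw [mul_assoc]; exact mul_nonneg (hw u) (mul_self_nonneg _)

lemma toBilin'_diagonal_mulVec_self_le (hw : 0 ≤ w) (hsymm : (diagonal w * M).IsSymm)
    (hM : ∀ u, ∑ v, |M u v| ≤ 1) (x : V → R) :
    Matrix.toBilin' (diagonal w) (M *ᵥ x) (M *ᵥ x) ≤ Matrix.toBilin' (diagonal w) x x := by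
  have hbalance : ∀ u v, w u * |M u v| = w v * |M v u| := fun u v => by
    have := hsymm.apply v u
    rw [diagonal_mul, diagonal_mul] at this
    rw [← abs_of_nonneg (hw u), ← abs_of_nonneg (hw v), ← abs_mul, ← abs_mul, this]
  calc Matrix.toBilin' (diagonal w) (M *ᵥ x) (M *ᵥ x)
      = ∑ u, w u * (M *ᵥ x) u ^ 2 := by simp only [toBilin'_diagonal_apply, sq, mul_assoc]
    _ ≤ ∑ u, w u * ∑ v, |M u v| * x v ^ 2 := Finset.sum_le_sum fun u _ =>
        mul_le_mul_of_nonneg_left (sq_mulVec_le_sum_abs_mul_sq (hM u) x) (hw u)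
    _ = ∑ v, w v * x v ^ 2 * ∑ u, |M v u| := by
        simp only [Finset.mul_sum]
        rw [Finset.sum_comm]
        refine Finset.sum_congr rfl fun v _ => Finset.sum_congr rfl fun u _ => ?_
        rw [← mul_assoc, hbalance, mul_right_comm]
    _ ≤ ∑ v, w v * x v ^ 2 := Finset.sum_le_sum fun v _ =>
        mul_le_of_le_one_right (mul_nonneg (hw v) (sq_nonneg _)) (hM v)
    _ = Matrix.toBilin' (diagonal w) x x := by simp only [toBilin'_diagonal_apply, sq, mul_assoc]

end WeightedForm

section RandomWalk

variable {V : Type*} [Fintype V] {A : Matrix V V ℝ}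

lemma gpi_nonneg (hA : ∀ u v, 0 ≤ A u v) : 0 ≤ gpi A := fun u =>
  div_nonneg (Finset.sum_nonneg fun v _ => hA u v)
    (Finset.sum_nonneg fun u _ => Finset.sum_nonneg fun v _ => hA u v)

lemma sum_gK_eq_one {u : V} (hu : gdeg A u ≠ 0) : ∑ v, gK A u v = 1 := by
  simp only [gK, Matrix.of_apply, ← Finset.sum_div]
  exact div_self hu

lemma diagonal_gpi_mul_gK [DecidableEq V] (hA : ∀ u, gdeg A u ≠ 0) :
    diagonal (gpi A) * gK A = (gm A)⁻¹ • A := by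
  ext u v
  have := hA u
  simp only [gpi, gK, diagonal_mul, Matrix.of_apply, Matrix.smul_apply, smul_eq_mul]
  field_simp

lemma isSymm_diagonal_gpi_mul_hadamard_gK [DecidableEq V] (hA : A.IsSymm)
    (hdeg : ∀ u, gdeg A u ≠ 0) {Ξ : Matrix V V ℝ} (hΞ : Ξ.IsSymm) :
    (diagonal (gpi A) * Ξ ⊙ gK A).IsSymm := by
  have hcomm : diagonal (gpi A) * Ξ ⊙ gK A = Ξ ⊙ (diagonal (gpi A) * gK A) := by
    ext u v
    simp only [diagonal_mul, hadamard_apply, mul_left_comm]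
  rw [hcomm, diagonal_gpi_mul_gK hdeg, Matrix.IsSymm, transpose_hadamard, transpose_smul, hΞ.eq,
    hA.eq]

lemma sum_abs_hadamard_gK_le_one (hA : ∀ u v, 0 ≤ A u v) {Ξ : Matrix V V ℝ} {u : V}
    (hu : gdeg A u ≠ 0) (hΞ : ∀ v, |Ξ u v| ≤ 1) : ∑ v, |(Ξ ⊙ gK A) u v| ≤ 1 := by
  have hK : ∀ v, 0 ≤ gK A u v := fun v =>
    div_nonneg (hA u v) (Finset.sum_nonneg fun v _ => hA u v)
  calc ∑ v, |(Ξ ⊙ gK A) u v| ≤ ∑ v, gK A u v := Finset.sum_le_sum fun v _ => by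
        rw [hadamard_apply, abs_mul, abs_of_nonneg (hK v)]
        exact mul_le_of_le_one_left (hK v) (hΞ v)
    _ = 1 := sum_gK_eq_one hu

end RandomWalk

lemma sum_sum_nonneg_of_posSemidef {R T : Type*} [CommRing R] [PartialOrder R] [StarRing R]
    {M : Matrix T T R} (hM : M.PosSemidef) (S : Finset T) : 0 ≤ ∑ i ∈ S, ∑ j ∈ S, M i j := by
  have h := (hM.submatrix ((↑) : S → T)).dotProduct_mulVec_nonneg 1
  simpa [dotProduct, mulVec, fun i => Finset.sum_attach S (M i),
    Finset.sum_attach S fun i => ∑ j ∈ S, M i j] using h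

theorem tree_moment_matrix_posSemidef_general {V T : Type*} [Fintype V] [DecidableEq V]
    (A : Matrix V V ℝ) (hA : A.IsSymm) (hA0 : ∀ u v, 0 ≤ A u v)
    (hrow : ∀ u, 0 < ∑ v, A u v)
    (Ξ : Matrix V V ℝ) (hΞsym : Ξ.IsSymm) (hΞ : ∀ u v, |Ξ u v| ≤ 1)
    (G : SimpleGraph T) (hG : G.IsTree) (f : T → V → ℝ) :
    letI Y : Matrix T T ℝ := Matrix.of fun i j =>
      ∑ u, gpi A u * f i u * ((Matrix.hadamard Ξ (gK A) ^ G.dist i j) *ᵥ f j) u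
    Y.PosSemidef ∧
    ∀ Ψ : Matrix T T ℝ, Ψ.PosSemidef →
      ∀ S : Finset T, 0 ≤ ∑ i ∈ S, ∑ j ∈ S, Ψ i j * Y i j := by
  have hdeg : ∀ u, gdeg A u ≠ 0 := fun u => (hrow u).ne'
  have hπ := gpi_nonneg hA0
  have hsymm := isSymm_diagonal_gpi_mul_hadamard_gK hA hdeg hΞsym
  have hcontr := toBilin'_diagonal_mulVec_self_le hπ hsymm fun u =>
    sum_abs_hadamard_gK_le_one hA0 (hdeg u) (hΞ u)
  have hY := posSemidef_distPow hG (isPosSemidef_toBilin'_diagonal hπ)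
    (isSelfAdjoint_toBilin' (Matrix.isSymm_diagonal _) hsymm) hcontr f
  simp only [← Matrix.toLin'_pow, Matrix.toLin'_apply, toBilin'_diagonal_apply] at hY
  exact ⟨hY, fun Ψ hΨ S => sum_sum_nonneg_of_posSemidef (hΨ.hadamard hY) S⟩

theorem tree_moment_matrix_posSemidef {V T : Type*} [Fintype V] [DecidableEq V]
    [Nonempty V] [Fintype T]
    (A : Matrix V V ℝ) (hA : A.IsSymm) (hA0 : ∀ u v, 0 ≤ A u v)
    (hrow : ∀ u, 0 < ∑ v, A u v)
    (Ξ : Matrix V V ℝ) (hΞsym : Ξ.IsSymm) (hΞ : ∀ u v, Ξ u v = 1 ∨ Ξ u v = -1)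
    (G : SimpleGraph T) (hG : G.IsTree) (f : V → ℝ) :
    letI Y : Matrix T T ℝ := Matrix.of fun i j =>
      ∑ u, gpi A u * f u * ((Matrix.hadamard Ξ (gK A) ^ G.dist i j) *ᵥ f) u
    Y.PosSemidef ∧
    ∀ Ψ : Matrix T T ℝ, Ψ.PosSemidef → 0 ≤ ∑ i, ∑ j, Ψ i j * Y i j :=
  have hΞ_abs : ∀ u v, |Ξ u v| ≤ 1 := fun u v => by rcases hΞ u v with h | h <;> simp [h]
  have h := tree_moment_matrix_posSemidef_general A hA hA0 hrow Ξ hΞsym hΞ_abs G hG fun _ => f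
  ⟨h.1, fun Ψ hΨ => h.2 Ψ hΨ Finset.univ⟩
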